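/- Let ∑_{i=1}^k αᵢ sᵢ ≥ 1 with α ∈ ℝ^k, α ≥ 0, be a valid inequality for conv(P(R,f)) whose induced lattice-free set L_α is a triangle of type T^{2A} with f in the interior of L_α. Then the split rank of ∑_{i=1}^k αᵢ sᵢ ≥ 1 with respect to P(R,f)⁰ is finite. -/

import Mathlib

open Set Pointwise

abbrev Pt : Type := Fin 2 → ℝ

def IsIntPt (x : Pt) : Prop := ∀ j, ∃ z : ℤ, x j = (z : ℝ)

def IsRatPt (x : Pt) : Prop := ∀ j, ∃ q : ℚ, x j = (q : ℝ)

/-- The mixed-integer set `P(R,f)`. -/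
def mixedP (k : ℕ) (r : Fin k → Pt) (f : Pt) : Set (Pt × (Fin k → ℝ)) :=
  {p | IsIntPt p.1 ∧ (∀ i, 0 ≤ p.2 i) ∧ p.1 = f + ∑ i, p.2 i • r i}

/-- The linear relaxation `P(R,f)⁰`. -/
def relaxP (k : ℕ) (r : Fin k → Pt) (f : Pt) : Set (Pt × (Fin k → ℝ)) :=
  {p | (∀ i, 0 ≤ p.2 i) ∧ p.1 = f + ∑ i, p.2 i • r i}

/-- The convex cone generated by a set (all nonnegative combinations). -/
def coneGen (S : Set Pt) : Set Pt :=
  {x | ∃ (n : ℕ) (c : Fin n → ℝ) (v : Fin n → Pt),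
    (∀ j, 0 ≤ c j) ∧ (∀ j, v j ∈ S) ∧ x = ∑ j, c j • v j}

/-- The induced lattice-free set `L_α`. -/
def inducedSet (k : ℕ) (r : Fin k → Pt) (f : Pt) (α : Fin k → ℝ) : Set Pt :=
  convexHull ℝ ({f} ∪ {x | ∃ i, 0 < α i ∧ x = f + (α i)⁻¹ • r i}) +
    coneGen {x | ∃ i, α i = 0 ∧ x = r i}

def LatticeFree (S : Set Pt) : Prop := ∀ x ∈ interior S, ¬ IsIntPt x

/-- Validity of `∑ αᵢ sᵢ ≥ γ` for `conv(P(R,f))`. -/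
def ValidIneq (k : ℕ) (r : Fin k → Pt) (f : Pt) (α : Fin k → ℝ) (γ : ℝ) : Prop :=
  ∀ p ∈ mixedP k r f, γ ≤ ∑ i, α i * p.2 i

noncomputable def affDim {V : Type*} [AddCommGroup V] [Module ℝ V] (S : Set V) : ℕ :=
  Module.finrank ℝ (affineSpan ℝ S).direction

/-- Facet-defining inequality: valid and its face of the closed convex hull has
affine dimension exactly one less. -/
def IsFacet (k : ℕ) (r : Fin k → Pt) (f : Pt) (α : Fin k → ℝ) (γ : ℝ) : Prop :=
  ValidIneq k r f α γ ∧
  affDim {p ∈ closure (convexHull ℝ (mixedP k r f)) | ∑ i, α i * p.2 i = γ} + 1 =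
    affDim (convexHull ℝ (mixedP k r f))

def splitClosure (k : ℕ) (C : Set (Pt × (Fin k → ℝ))) : Set (Pt × (Fin k → ℝ)) :=
  ⋂ (π : Fin 2 → ℤ) (π₀ : ℤ),
    convexHull ℝ ((C ∩ {p | ∑ j, (π j : ℝ) * p.1 j ≤ (π₀ : ℝ)}) ∪
      (C ∩ {p | (π₀ : ℝ) + 1 ≤ ∑ j, (π j : ℝ) * p.1 j}))

def closures (k : ℕ) (r : Fin k → Pt) (f : Pt) : ℕ → Set (Pt × (Fin k → ℝ))
  | 0 => relaxP k r f
  | n + 1 => splitClosure k (closures k r f n)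

/-- The split rank of `∑ αᵢ sᵢ ≥ γ` w.r.t. `P(R,f)⁰`: least `j` such that the
inequality is valid on the `j`-th split closure, `⊤` if none exists. -/
noncomputable def splitRank (k : ℕ) (r : Fin k → Pt) (f : Pt) (α : Fin k → ℝ) (γ : ℝ) : ℕ∞ :=
  sInf {j : ℕ∞ | ∃ n : ℕ, j = (n : ℕ∞) ∧ ∀ p ∈ closures k r f n, γ ≤ ∑ i, α i * p.2 i}

def IsSplitSet (S : Set Pt) : Prop :=
  ∃ (π : Fin 2 → ℤ) (π₀ : ℤ), π ≠ 0 ∧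
    S = {x : Pt | (π₀ : ℝ) ≤ ∑ j, (π j : ℝ) * x j ∧ ∑ j, (π j : ℝ) * x j ≤ (π₀ : ℝ) + 1}

/-- Triangle of type `T¹`. -/
def IsT1 (S : Set Pt) : Prop :=
  ∃ v : Fin 3 → Pt, AffineIndependent ℝ v ∧ (∀ i, IsIntPt (v i)) ∧
    S = convexHull ℝ (Set.range v) ∧
    ∀ i j, i ≠ j → ∃! z, z ∈ openSegment ℝ (v i) (v j) ∧ IsIntPt z

/-- Triangle of type `T^{2A}`. -/
def IsT2A (S : Set Pt) : Prop :=
  ∃ v0 v1 v2 : Pt, AffineIndependent ℝ ![v0, v1, v2] ∧ ¬ IsIntPt v0 ∧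
    S = convexHull ℝ {v0, v1, v2} ∧
    (∃ z1 z2 : Pt, z1 ≠ z2 ∧ IsIntPt z1 ∧ IsIntPt z2 ∧
      z1 ∈ segment ℝ v1 v2 ∧ z2 ∈ segment ℝ v1 v2) ∧
    (∃! z, z ∈ openSegment ℝ v0 v1 ∧ IsIntPt z) ∧
    (∃! z, z ∈ openSegment ℝ v0 v2 ∧ IsIntPt z)

/-- Triangle of type `T^{2B}`. -/
def IsT2B (S : Set Pt) : Prop :=
  ∃ v0 v1 v2 : Pt, AffineIndependent ℝ ![v0, v1, v2] ∧ ¬ IsIntPt v0 ∧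
    S = convexHull ℝ {v0, v1, v2} ∧
    (∃ z1 z2 : Pt, z1 ≠ z2 ∧ IsIntPt z1 ∧ IsIntPt z2 ∧
      z1 ∈ segment ℝ v1 v2 ∧ z2 ∈ segment ℝ v1 v2) ∧
    (∃! z, z ∈ openSegment ℝ v0 v1 ∧ IsIntPt z) ∧
    (∀ z ∈ openSegment ℝ v0 v2, ¬ IsIntPt z)

/-- Triangle of type `T³`. -/
def IsT3 (S : Set Pt) : Prop :=
  ∃ v0 v1 v2 : Pt, AffineIndependent ℝ ![v0, v1, v2] ∧
    ¬ IsIntPt v0 ∧ ¬ IsIntPt v1 ∧ ¬ IsIntPt v2 ∧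
    S = convexHull ℝ {v0, v1, v2} ∧
    (∃! z, z ∈ openSegment ℝ v0 v1 ∧ IsIntPt z) ∧
    (∃! z, z ∈ openSegment ℝ v1 v2 ∧ IsIntPt z) ∧
    (∃! z, z ∈ openSegment ℝ v0 v2 ∧ IsIntPt z) ∧
    (∀ z, IsIntPt z → z ∈ frontier S →
      z ∈ openSegment ℝ v0 v1 ∨ z ∈ openSegment ℝ v1 v2 ∨ z ∈ openSegment ℝ v0 v2)

/-- A quadrilateral with vertices `v 0, v 1, v 2, v 3` in cyclic order; each `vᵢ`
is an extreme point of the hull and each side lies on the boundary. -/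
def IsQuadWith (S : Set Pt) (v : Fin 4 → Pt) : Prop :=
  S = convexHull ℝ (Set.range v) ∧
  (∀ i, v i ∈ Set.extremePoints ℝ S) ∧
  (∀ i : Fin 4, segment ℝ (v i) (v (i + 1)) ⊆ frontier S)

/-- Quadrilateral of type `Q¹`. -/
def IsQ1 (S : Set Pt) : Prop :=
  ∃ v : Fin 4 → Pt, IsQuadWith S v ∧
    (∃ z1 z2 : Pt, z1 ≠ z2 ∧ IsIntPt z1 ∧ IsIntPt z2 ∧
      z1 ∈ segment ℝ (v 0) (v 1) ∧ z2 ∈ segment ℝ (v 0) (v 1)) ∧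
    (∃ j : Fin 4, j ≠ 0 ∧
      (∀ i : Fin 4, i ≠ 0 → i ≠ j → ∃ z, IsIntPt z ∧ z ∈ segment ℝ (v i) (v (i + 1))) ∧
      (∀ z ∈ openSegment ℝ (v j) (v (j + 1)), ¬ IsIntPt z)) ∧
    (∃ T : Set Pt, (IsT1 T ∨ IsT2A T) ∧ S ⊆ T)

/-- Quadrilateral of type `Q²`. -/
def IsQ2 (S : Set Pt) : Prop :=
  ∃ v : Fin 4 → Pt, IsQuadWith S v ∧ (∀ i, ¬ IsIntPt (v i)) ∧
    ∀ i : Fin 4, ∃! z, z ∈ openSegment ℝ (v i) (v (i + 1)) ∧ IsIntPt z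

/-!
Let `u = 1 - ∑ αᵢ sᵢ` be the slack. A property is said to hold eventually if it holds on some
iterated split closure; a linear inequality holds eventually as soon as it eventually holds on both
sides of some split disjunction, and the goal is that eventually `u ≤ 0`.

In suitable integral coordinates `X`, `Y` the base of the triangle lies on `Y = 0` and contains
`(0, 0)` and `(1, 0)`, while the other two sides pass through `(0, 1)` and `(1, 1)`. Every side
bounds `u` by a positive multiple of the affine function that it defines. Alternating the splits
`X ≤ 0 ∨ X ≥ 1` and `Y ≤ 0 ∨ Y ≥ 1` improves the bound `x * u ≤ Y` of the base by a fixed amount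
added to `x`, so that `u` eventually falls below every `ε > 0`. Since the base has rational
vertices, the sides have rational slopes; once `u` is small, a split parallel to a side replaces
the multiple in its bound by any smaller positive one. After this the two sides bound `u` by
the same `ρ * (1 - Y)` on `X ≤ 0` and on `X ≥ 1`, hence everywhere, and with the bound of the base
the split on `Y` gives `u ≤ 0`.
-/

/-- The slack `u` is closed under split cuts along `F` in the integral coordinates `X`, `Y`: a
linear inequality holds eventually as soon as it eventually holds on the two sides of some split
disjunction. -/
def ClosedUnderSplits {ι : Type*} (F : Filter ι) (X Y u : ι → ℝ) : Prop :=
  ∀ (m n N : ℤ) (w a b c : ℝ),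
    (∀ᶠ p in F, (m * X p + n * Y p ≤ N ∨ N + 1 ≤ m * X p + n * Y p) →
      w * u p ≤ a * X p + b * Y p + c) →
    ∀ᶠ p in F, w * u p ≤ a * X p + b * Y p + c

namespace ClosedUnderSplits

variable {ι : Type*} {F : Filter ι} {X Y u : ι → ℝ} {l₁ l₂ x : ℝ} {a b : ℚ}

lemma reflect (hs : ClosedUnderSplits F X Y u) :
    ClosedUnderSplits F (fun p => 1 - X p) Y u := by
  intro m n N w a b c h
  have := hs (-m) n (N - m) w (-a) b (c + a) ?_
  · filter_upwards [this] with p hp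
    linarith
  · filter_upwards [h] with p hp hd
    push_cast at hd
    linarith [hp (hd.imp (fun h => by linarith) (fun h => by linarith))]

lemma split_fst (hs : ClosedUnderSplits F X Y u) {w b c : ℝ}
    (h : ∀ᶠ p in F, (X p ≤ 0 ∨ 1 ≤ X p) → w * u p ≤ b * Y p + c) :
    ∀ᶠ p in F, w * u p ≤ b * Y p + c := by
  simpa using hs 1 0 0 w 0 b c (by simpa using h)

lemma split_snd (hs : ClosedUnderSplits F X Y u) (N : ℤ) {w a b c : ℝ}
    (h : ∀ᶠ p in F, (Y p ≤ N ∨ N + 1 ≤ Y p) → w * u p ≤ a * X p + b * Y p + c) :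
    ∀ᶠ p in F, w * u p ≤ a * X p + b * Y p + c :=
  hs 0 1 N w a b c (by simpa using h)

lemma improve_of_pos (hs : ClosedUnderSplits F X Y u) {c : ℝ} (hx : 0 < x) (hc : 0 < c)
    (hbase : ∀ᶠ p in F, x * u p ≤ Y p)
    (hside : ∀ᶠ p in F, (X p ≤ 0 ∨ 1 ≤ X p) → c * u p ≤ max 0 (1 - Y p)) :
    (∀ᶠ p in F, (x + c) * u p ≤ 1) ∧ ∀ᶠ p in F, (x + c) * u p ≤ Y p := by
  have hone : ∀ᶠ p in F, (x + c) * u p ≤ 1 := by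
    have := hs.split_fst (w := x + c) (b := 0) (c := 1) (by
      filter_upwards [hbase, hside] with p hpY hpX hd
      rcases le_max_iff.1 (hpX hd) with hu | hu
      · nlinarith [nonpos_of_mul_nonpos_right hu hc]
      · linarith)
    simpa using this
  refine ⟨hone, ?_⟩
  have := hs.split_snd 0 (w := x + c) (a := 0) (b := 1) (c := 0) (by
    filter_upwards [hbase, hone] with p hpY hp1 hd
    push_cast at hd
    rcases hd with hY | hY
    · nlinarith [nonpos_of_mul_nonpos_right (hpY.trans hY) hx]
    · linarith)
  simpa using this

lemma eventually_le_of_pos (hs : ClosedUnderSplits F X Y u) {c : ℝ} (hx : 0 < x) (hc : 0 < c)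
    (hbase : ∀ᶠ p in F, x * u p ≤ Y p)
    (hside : ∀ᶠ p in F, (X p ≤ 0 ∨ 1 ≤ X p) → c * u p ≤ max 0 (1 - Y p))
    {ε : ℝ} (hε : 0 < ε) : ∀ᶠ p in F, u p ≤ ε := by
  have hrounds (n : ℕ) : ∀ᶠ p in F, (x + n * c) * u p ≤ Y p := by
    induction n with
    | zero => simpa using hbase
    | succ n ih =>
      filter_upwards [(hs.improve_of_pos (by positivity) hc ih hside).2] with p hp
      push_cast
      linarith
  obtain ⟨n, hn⟩ := exists_nat_gt ((c * ε)⁻¹)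
  have hn' : 1 < n * c * ε := by rwa [inv_lt_iff_one_lt_mul₀ (by positivity), ← mul_assoc] at hn
  filter_upwards [(hs.improve_of_pos (by positivity) hc (hrounds n) hside).1] with p hp
  by_contra! hlt
  have : (n * c) * ε ≤ (x + n * c + c) * u p := by gcongr; linarith
  linarith

/-- The split parallel to a side with rational slope tilts the inequality of that side. -/
lemma tilt (hs : ClosedUnderSplits F X Y u) (hsmall : ∀ ε > 0, ∀ᶠ p in F, u p ≤ ε)
    {l l' : ℝ} (hl' : 0 < l') (hl : l' ≤ l)
    (h : ∀ᶠ p in F, u p ≤ l * (X p - a * (Y p - 1))) :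
    ∀ᶠ p in F, u p ≤ l' * (X p - a * (Y p - 1)) := by
  have hden : (0 : ℝ) < a.den := by exact_mod_cast a.den_pos
  have hnum : (a : ℝ) * a.den = a.num := by exact_mod_cast Rat.mul_den_eq_num a
  have := hs a.den (-a.num) (-a.num) 1 l' (-(l' * a)) (l' * a) (by
    filter_upwards [h, hsmall (l' / a.den) (by positivity)] with p hp hp' hd
    set z := X p - a * (Y p - 1) with hz
    have hsplit : a.den * z ≤ 0 ∨ 1 ≤ a.den * z := by
      have : a.den * z = a.den * X p + (-a.num : ℤ) * Y p + a.num := by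
        rw [hz]
        push_cast
        linear_combination -(Y p - 1) * hnum
      rw [this]
      exact hd.imp (fun h => by push_cast at h ⊢; linarith) (fun h => by push_cast at h ⊢; linarith)
    have : u p ≤ l' * z := by
      rcases hsplit with hz0 | hz1
      · nlinarith [nonpos_of_mul_nonpos_right hz0 hden]
      · refine hp'.trans ?_
        rw [div_le_iff₀ hden]
        nlinarith
    linarith)
  filter_upwards [this] with p hp
  linarith

open scoped Topology

/-- A vertical left side passes through the lattice points `(0, 1)` and `(0, 2)`; the split between
them combines the two sides into an inequality that decreases in `Y`. -/
lemma eventually_le_mul_one_sub_of_nonpos_of_zero (hs : ClosedUnderSplits F X Y u)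
    (hsmall : ∀ ε > 0, ∀ᶠ p in F, u p ≤ ε) (hb : 1 < b) (hl₁ : 0 < l₁) (hl₂ : 0 < l₂)
    (hleft : ∀ᶠ p in F, u p ≤ l₁ * X p)
    (hright : ∀ᶠ p in F, u p ≤ l₂ * (1 - X p - b * (Y p - 1))) :
    ∀ᶠ ρ in 𝓝[>] 0, ∀ᶠ p in F, X p ≤ 0 → u p ≤ ρ * (1 - Y p) := by
  have hb : (0 : ℝ) < b - 1 := sub_pos.2 (by exact_mod_cast hb)
  have hl : 0 < l₁ + l₂ := by positivity
  filter_upwards [Ioo_mem_nhdsGT (show 0 < l₁ / (l₁ + l₂) * (l₂ * (b - 1)) by positivity)]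
    with ρ ⟨hρ0, hρ⟩
  obtain ⟨θ, rfl⟩ : ∃ θ, θ * (l₂ * (b - 1)) = ρ := ⟨ρ / (l₂ * (b - 1)), by field_simp⟩
  have hθ0 : 0 < θ := pos_of_mul_pos_left hρ0 (by positivity)
  have hθl : θ * (l₁ + l₂) < l₁ := (lt_div_iff₀ hl).1 (lt_of_mul_lt_mul_right hρ (by positivity))
  have hθ1 : θ ≤ 1 := by nlinarith
  set l' := l₁ - θ * (l₁ + l₂)
  have htilt : ∀ᶠ p in F, u p ≤ l' * X p := by
    simpa using hs.tilt hsmall (a := 0) (l := l₁) (l' := l') (by linarith) (by nlinarith)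
      (by simpa using hleft)
  have hmix := hs.split_snd 1 (w := 1) (a := l') (b := -(θ * (l₂ * (b - 1))))
    (c := θ * (l₂ * (b - 1))) (by
      filter_upwards [hleft, htilt, hright] with p hpl hpt hpr hd
      push_cast at hd
      rcases hd with hY | hY
      · nlinarith
      · have : (1 - θ) * u p ≤ (1 - θ) * (l₁ * X p) := by gcongr
        have : θ * u p ≤ θ * (l₂ * (1 - X p - b * (Y p - 1))) := by gcongr
        have : 0 ≤ θ * l₂ * (Y p - 2) := by
          have : 0 ≤ Y p - 2 := by linarith
          positivity
        linarith)
  filter_upwards [hmix] with p hp hX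
  nlinarith [mul_nonneg (sub_pos.2 hθl).le (neg_nonneg.2 hX)]

lemma eventually_le_mul_one_sub_of_nonpos (hs : ClosedUnderSplits F X Y u)
    (hsmall : ∀ ε > 0, ∀ᶠ p in F, u p ≤ ε) (ha : 0 ≤ a) (hab : a = 0 → 1 < b)
    (hl₁ : 0 < l₁) (hl₂ : 0 < l₂)
    (hleft : ∀ᶠ p in F, u p ≤ l₁ * (X p - a * (Y p - 1)))
    (hright : ∀ᶠ p in F, u p ≤ l₂ * (1 - X p - b * (Y p - 1))) :
    ∀ᶠ ρ in 𝓝[>] 0, ∀ᶠ p in F, X p ≤ 0 → u p ≤ ρ * (1 - Y p) := by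
  rcases ha.eq_or_lt with rfl | ha0
  · exact hs.eventually_le_mul_one_sub_of_nonpos_of_zero hsmall (hab rfl) hl₁ hl₂
      (by simpa using hleft) hright
  have ha0 : (0 : ℝ) < a := by exact_mod_cast ha0
  filter_upwards [Ioc_mem_nhdsGT (show 0 < l₁ * a by positivity)] with ρ ⟨hρ0, hρ⟩
  have htilt := hs.tilt hsmall (l' := ρ / a) (by positivity) ((div_le_iff₀ ha0).2 hρ) hleft
  filter_upwards [htilt] with p hp hX
  have : ρ / a * (X p - a * (Y p - 1)) = ρ / a * X p + ρ * (1 - Y p) := by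
    field_simp
    ring
  have : ρ / a * X p ≤ 0 := mul_nonpos_of_nonneg_of_nonpos (by positivity) hX
  linarith

lemma le_zero (hs : ClosedUnderSplits F X Y u) {ρ : ℝ} (hx : 0 < x) (hρ : 0 < ρ)
    (hbase : ∀ᶠ p in F, x * u p ≤ Y p)
    (hside : ∀ᶠ p in F, (X p ≤ 0 ∨ 1 ≤ X p) → u p ≤ ρ * (1 - Y p)) :
    ∀ᶠ p in F, u p ≤ 0 := by
  have htop := hs.split_fst (w := 1) (b := -ρ) (c := ρ) (by
    filter_upwards [hside] with p hp hd
    linarith [hp hd])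
  have := hs.split_snd 0 (w := 1) (a := 0) (b := 0) (c := 0) (by
    filter_upwards [hbase, htop] with p hpY hpt hd
    push_cast at hd
    rcases hd with hY | hY <;> nlinarith)
  simpa using this

lemma le_zero_of_triangle (hs : ClosedUnderSplits F X Y u)
    (ha : 0 ≤ a) (hb : 0 ≤ b) (hab : a = 0 → 1 < b) (hba : b = 0 → 1 < a)
    (hx : 0 < x) (hl₁ : 0 < l₁) (hl₂ : 0 < l₂)
    (hbase : ∀ᶠ p in F, x * u p ≤ Y p)
    (hleft : ∀ᶠ p in F, u p ≤ l₁ * (X p - a * (Y p - 1)))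
    (hright : ∀ᶠ p in F, u p ≤ l₂ * (1 - X p - b * (Y p - 1))) :
    ∀ᶠ p in F, u p ≤ 0 := by
  have hsmall (ε : ℝ) (hε : ε > 0) : ∀ᶠ p in F, u p ≤ ε := by
    refine hs.eventually_le_of_pos (c := (1 + l₁ * a + l₂ * b)⁻¹) hx (by positivity) hbase ?_ hε
    filter_upwards [hleft, hright] with p hpl hpr hd
    rw [inv_mul_le_iff₀ (by positivity)]
    have hmono {d : ℝ} (hd0 : 0 ≤ d) (hd : d ≤ 1 + l₁ * a + l₂ * b) (hu : u p ≤ d * (1 - Y p)) :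
        u p ≤ (1 + l₁ * a + l₂ * b) * max 0 (1 - Y p) :=
      calc u p ≤ d * max 0 (1 - Y p) := hu.trans (by gcongr; exact le_max_right _ _)
        _ ≤ (1 + l₁ * a + l₂ * b) * max 0 (1 - Y p) := by gcongr
    have hla : 0 ≤ l₁ * a := by positivity
    have hlb : 0 ≤ l₂ * b := by positivity
    rcases hd with hX | hX
    · exact hmono hla (by linarith) (by nlinarith)
    · exact hmono hlb (by linarith) (by nlinarith)
  have hL := hs.eventually_le_mul_one_sub_of_nonpos hsmall ha hab hl₁ hl₂ hleft hright
  have hR := hs.reflect.eventually_le_mul_one_sub_of_nonpos hsmall hb hba hl₂ hl₁ hright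
    (by simpa using hleft)
  obtain ⟨ρ, ⟨hρL, hρR⟩, hρ⟩ := ((hL.and hR).and self_mem_nhdsWithin).exists
  refine hs.le_zero hx hρ hbase ?_
  filter_upwards [hρL, hρR] with p hpL hpR
  exact fun hX => hX.elim hpL fun hX => hpR (by linarith)

end ClosedUnderSplits

/-- The line of inverse slope `σ` through `(x, 0)` carries a lattice point at height `n`, strictly
between the heights `0` and `h`. -/
def IsLatticeHeight (x σ h : ℝ) (n : ℤ) : Prop :=
  0 < n ∧ n < h ∧ ∃ m : ℤ, (m : ℝ) = x + n * σ

lemma isLatticeHeight_reflect {x σ h : ℝ} {n : ℤ} :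
    IsLatticeHeight (1 - x) (-σ) h n ↔ IsLatticeHeight x σ h n := by
  refine and_congr_right fun _ => and_congr_right fun _ => ⟨?_, ?_⟩ <;>
  · rintro ⟨m, hm⟩
    exact ⟨1 - m, by push_cast; linarith⟩

/-- A `T^{2A}` triangle with no interior lattice point, placed so that its base is
`[x₁, x₂] × {0}` and contains `(0, 0)` and `(1, 0)`. Its apex has height `h`, and `σ₁`, `σ₂` are
the inverse slopes of its left and right sides. -/
structure IsT2AProfile (x₁ x₂ σ₁ σ₂ h : ℝ) : Prop where
  left_nonpos : x₁ ≤ 0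
  one_le_right : 1 ≤ x₂
  height_pos : 0 < h
  apex_eq : x₁ + h * σ₁ = x₂ + h * σ₂
  apex_not_int : ∀ m n : ℤ, h = n → x₁ + h * σ₁ ≠ m
  latticeFree : ∀ m n : ℤ, 0 < n → x₁ + n * σ₁ < m → x₂ + n * σ₂ ≤ m
  existsUnique_left : ∃! n, IsLatticeHeight x₁ σ₁ h n
  existsUnique_right : ∃! n, IsLatticeHeight x₂ σ₂ h n

namespace IsT2AProfile

variable {x₁ x₂ σ₁ σ₂ h : ℝ}

lemma reflect (H : IsT2AProfile x₁ x₂ σ₁ σ₂ h) :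
    IsT2AProfile (1 - x₂) (1 - x₁) (-σ₂) (-σ₁) h where
  left_nonpos := by linarith [H.one_le_right]
  one_le_right := by linarith [H.left_nonpos]
  height_pos := H.height_pos
  apex_eq := by linarith [H.apex_eq]
  apex_not_int m n hn hm := H.apex_not_int (1 - m) n hn (by push_cast; linarith [H.apex_eq])
  latticeFree m n hn hm := by
    by_contra! hlt
    have := H.latticeFree (1 - m) n hn (by push_cast; linarith)
    push_cast at this
    linarith
  existsUnique_left := by simpa only [isLatticeHeight_reflect] using H.existsUnique_right
  existsUnique_right := by simpa only [isLatticeHeight_reflect] using H.existsUnique_left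

lemma left_lt_right (H : IsT2AProfile x₁ x₂ σ₁ σ₂ h) {t : ℝ} (ht : t < h) :
    x₁ + t * σ₁ < x₂ + t * σ₂ := by
  have hbase : 0 < x₂ - x₁ := by linarith [H.left_nonpos, H.one_le_right]
  have hwidth : h * (x₂ - x₁ + t * (σ₂ - σ₁)) = (h - t) * (x₂ - x₁) := by
    linear_combination -t * H.apex_eq
  have := pos_of_mul_pos_right (hwidth ▸ mul_pos (sub_pos.2 ht) hbase) H.height_pos.le
  linarith

/-- If the lattice point were `(m, n)` with `n ≥ 2`, then `(⌈m / n⌉, 1)` would lie in the interior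
of the triangle or be a second lattice point of the side. -/
lemma eq_one_of_isLatticeHeight (H : IsT2AProfile x₁ x₂ σ₁ σ₂ h) {n : ℤ}
    (hn : IsLatticeHeight x₁ σ₁ h n) : n = 1 := by
  obtain ⟨hn0, hnh, m, hm⟩ := id hn
  have hn0' : (0 : ℝ) < n := by exact_mod_cast hn0
  obtain ⟨q, hmq, hqm⟩ : ∃ q : ℤ, m ≤ n * q ∧ n * q ≤ m + (n - 1) :=
    ⟨(m + (n - 1)) / n, by linarith [Int.lt_mul_ediv_self_add (x := m + (n - 1)) hn0],
      Int.mul_ediv_self_le hn0.ne'⟩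
  have hmq' : (m : ℝ) ≤ n * q := by exact_mod_cast hmq
  have hqm' : (n : ℝ) * q ≤ m + (n - 1) := by exact_mod_cast hqm
  have hleft : x₁ + σ₁ ≤ q := by
    refine le_of_mul_le_mul_left ?_ hn0'
    nlinarith [H.left_nonpos]
  have hright : q < x₂ + σ₂ := by
    refine lt_of_mul_lt_mul_left ?_ hn0'.le
    nlinarith [H.one_le_right, H.left_lt_right hnh]
  rcases hleft.eq_or_lt with heq | hlt
  · exact H.existsUnique_left.unique hn
      ⟨one_pos, by push_cast; linarith, q, by simpa using heq.symm⟩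
  · exact absurd (H.latticeFree q 1 one_pos (by simpa using hlt)) (by simpa using hright)

lemma isLatticeHeight_one (H : IsT2AProfile x₁ x₂ σ₁ σ₂ h) : IsLatticeHeight x₁ σ₁ h 1 := by
  obtain ⟨n, hn⟩ := H.existsUnique_left.exists
  exact H.eq_one_of_isLatticeHeight hn ▸ hn

lemma exists_section_one (H : IsT2AProfile x₁ x₂ σ₁ σ₂ h) :
    ∃ m : ℤ, x₁ + σ₁ = m ∧ x₂ + σ₂ = m + 1 := by
  obtain ⟨-, hh, m, hm⟩ := H.isLatticeHeight_one
  obtain ⟨-, -, m', hm'⟩ := isLatticeHeight_reflect.1 H.reflect.isLatticeHeight_one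
  push_cast at hh hm hm'
  have hlt : m < m' := by
    have := H.left_lt_right hh
    exact_mod_cast (by linarith : (m : ℝ) < m')
  have hle : m' ≤ m + 1 := by
    have := H.latticeFree (m + 1) 1 one_pos (by push_cast; linarith)
    push_cast at this
    exact_mod_cast (by linarith : (m' : ℝ) ≤ m + 1)
  have : (m' : ℝ) = m + 1 := by exact_mod_cast (by omega : m' = m + 1)
  exact ⟨m, by linarith, by linarith⟩

lemma two_lt_of_left_eq_zero (H : IsT2AProfile x₁ x₂ σ₁ σ₂ h) (hx : x₁ = 0) : 2 < x₂ := by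
  obtain ⟨m, hm₁, hm₂⟩ := H.exists_section_one
  obtain rfl : σ₁ = m := by linarith
  obtain rfl : σ₂ = m + 1 - x₂ := by linarith
  have happ := H.apex_eq
  have hh : h ≤ 2 := by
    by_contra! hlt
    have := H.eq_one_of_isLatticeHeight ⟨two_pos, by exact_mod_cast hlt, 2 * m, by simp [hx]⟩
    omega
  have hge : 2 ≤ x₂ := by nlinarith [H.one_le_right]
  refine lt_of_le_of_ne hge ?_
  rintro rfl
  obtain rfl : h = 2 := by linarith
  exact H.apex_not_int (2 * m) 2 (by norm_num) (by simp [hx])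

end IsT2AProfile

section SplitFilter

variable {k : ℕ} {r : Fin k → Pt} {f : Pt}

lemma splitClosure_subset {C : Set (Pt × (Fin k → ℝ))} (hC : Convex ℝ C) :
    splitClosure k C ⊆ C := fun _ hp =>
  convexHull_min (union_subset inter_subset_left inter_subset_left) hC (mem_iInter₂.1 hp 0 0)

lemma convex_splitClosure (C : Set (Pt × (Fin k → ℝ))) : Convex ℝ (splitClosure k C) :=
  convex_iInter₂ fun _ _ => convex_convexHull ℝ _

lemma convex_relaxP : Convex ℝ (relaxP k r f) := by
  have hpreimage : relaxP k r f = LinearMap.snd ℝ Pt (Fin k → ℝ) ⁻¹' Ici 0 ∩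
      (LinearMap.fst ℝ Pt (Fin k → ℝ) -
        Fintype.linearCombination ℝ r ∘ₗ LinearMap.snd ℝ Pt (Fin k → ℝ)) ⁻¹' {f} := by
    ext p
    simp [relaxP, Fintype.linearCombination_apply, sub_eq_iff_eq_add, Pi.le_def]
  rw [hpreimage]
  exact ((convex_Ici 0).linear_preimage _).inter ((convex_singleton f).linear_preimage _)

lemma convex_closures (n : ℕ) : Convex ℝ (closures k r f n) := by
  cases n with
  | zero => exact convex_relaxP
  | succ n => exact convex_splitClosure _

lemma antitone_closures : Antitone (closures k r f) :=
  antitone_nat_of_succ_le fun n => splitClosure_subset (convex_closures n)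

/-- The filter generated by the iterated split closures: a property holds eventually along it iff
it holds on all of some iterated closure, i.e. after finitely many rounds of split cuts. -/
def splitFilter (k : ℕ) (r : Fin k → Pt) (f : Pt) : Filter (Pt × (Fin k → ℝ)) :=
  ⨅ n, Filter.principal (closures k r f n)

lemma eventually_splitFilter {P : Pt × (Fin k → ℝ) → Prop} :
    (∀ᶠ p in splitFilter k r f, P p) ↔ ∃ n, ∀ p ∈ closures k r f n, P p := by
  rw [splitFilter, (Filter.hasBasis_iInf_principal antitone_closures.directed_ge).eventually_iff]
  simp

lemma eventually_splitFilter_of_mem_relaxP {P : Pt × (Fin k → ℝ) → Prop}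
    (h : ∀ p ∈ relaxP k r f, P p) : ∀ᶠ p in splitFilter k r f, P p :=
  eventually_splitFilter.2 ⟨0, h⟩

lemma eventually_mem_of_split {S : Set (Pt × (Fin k → ℝ))} (hS : Convex ℝ S) (π : Fin 2 → ℤ)
    (π₀ : ℤ) (h : ∀ᶠ p in splitFilter k r f,
      (∑ j, (π j : ℝ) * p.1 j ≤ π₀ ∨ π₀ + 1 ≤ ∑ j, (π j : ℝ) * p.1 j) → p ∈ S) :
    ∀ᶠ p in splitFilter k r f, p ∈ S := by
  obtain ⟨n, hn⟩ := eventually_splitFilter.1 h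
  refine eventually_splitFilter.2 ⟨n + 1, fun p hp => ?_⟩
  refine convexHull_min (union_subset ?_ ?_) hS (mem_iInter₂.1 hp π π₀)
  · exact fun q ⟨hq, hle⟩ => hn q hq (Or.inl hle)
  · exact fun q ⟨hq, hge⟩ => hn q hq (Or.inr hge)

lemma splitRank_ne_top {α : Fin k → ℝ} {γ : ℝ}
    (h : ∀ᶠ p in splitFilter k r f, γ ≤ ∑ i, α i * p.2 i) : splitRank k r f α γ ≠ ⊤ := by
  obtain ⟨n, hn⟩ := eventually_splitFilter.1 h
  exact ne_top_of_le_ne_top (ENat.natCast_ne_top n) (sInf_le ⟨n, rfl, hn⟩)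

end SplitFilter

section IntegralCoordinates

/-- An affine function on the plane with integer coefficients. -/
def IsIntAff (X : Pt →ᵃ[ℝ] ℝ) : Prop :=
  ∃ (m : Fin 2 → ℤ) (c : ℤ), ∀ x, X x = ∑ j, (m j : ℝ) * x j + c

/-- Affine coordinates `X`, `Y` of the plane that identify its integer points with `ℤ²`. -/
structure IsIntCoord (X Y : Pt →ᵃ[ℝ] ℝ) : Prop where
  fst : IsIntAff X
  snd : IsIntAff Y
  surj : ∀ m n : ℤ, ∃ z, IsIntPt z ∧ X z = m ∧ Y z = n
  inj : ∀ z w, X z = X w → Y z = Y w → z = w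

variable {X Y : Pt →ᵃ[ℝ] ℝ}

namespace IsIntAff

lemma exists_int (hX : IsIntAff X) {z : Pt} (hz : IsIntPt z) : ∃ n : ℤ, X z = n := by
  obtain ⟨m, c, hX⟩ := hX
  choose a ha using hz
  exact ⟨∑ j, m j * a j + c, by simp [hX, ha]⟩

lemma neg (hX : IsIntAff X) : IsIntAff (-X) := by
  obtain ⟨m, c, hX⟩ := hX
  exact ⟨-m, -c, fun x => by simp [hX]; ring⟩

lemma one_sub (hX : IsIntAff X) : IsIntAff (AffineMap.const ℝ Pt 1 - X) := by
  obtain ⟨m, c, hX⟩ := hX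
  exact ⟨-m, 1 - c, fun x => by simp [hX]; ring⟩

lemma sub_smul (hX : IsIntAff X) (hY : IsIntAff Y) (n : ℤ) : IsIntAff (X - (n : ℝ) • Y) := by
  obtain ⟨m, c, hX⟩ := hX
  obtain ⟨m', c', hY⟩ := hY
  exact ⟨fun j => m j - n * m' j, c - n * c', fun x => by simp [hX, hY]; ring⟩

lemma exists_rat_along (hX : IsIntAff X) {f v : Pt} (hf : IsRatPt f) (hv : IsRatPt v) :
    ∃ p q : ℚ, ∀ t : ℝ, X (f + t • v) = p + t * q := by
  obtain ⟨m, c, hX⟩ := hX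
  choose f' hf using hf
  choose v' hv using hv
  exact ⟨∑ j, m j * f' j + c, ∑ j, m j * v' j, fun t => by simp [hX, hf, hv]; ring⟩

end IsIntAff

lemma exists_rat_of_isRatPt_of_eq_zero (hX : IsIntAff X) (hY : IsIntAff Y) {f v : Pt}
    (hf : IsRatPt f) (hv : IsRatPt v) {t : ℝ} (hYf : Y f ≠ 0) (ht : Y (f + t • v) = 0) :
    ∃ q : ℚ, X (f + t • v) = q := by
  obtain ⟨p, q, hX⟩ := hX.exists_rat_along hf hv
  obtain ⟨p', q', hY⟩ := hY.exists_rat_along hf hv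
  have hp' : Y f = p' := by simpa using hY 0
  rw [hp'] at hYf
  rw [hY] at ht
  have hq' : (q' : ℝ) ≠ 0 := by
    intro hq'
    simp [hq', hYf] at ht
  obtain rfl : t = -p' / q' := by
    rw [eq_div_iff hq']
    linarith
  exact ⟨p + -p' / q' * q, by rw [hX]; push_cast; rfl⟩

namespace IsIntCoord

lemma isIntPt (h : IsIntCoord X Y) {z : Pt} {m n : ℤ} (hm : X z = m) (hn : Y z = n) :
    IsIntPt z := by
  obtain ⟨w, hw, hXw, hYw⟩ := h.surj m n
  rwa [h.inj z w (hm.trans hXw.symm) (hn.trans hYw.symm)]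

lemma neg_snd (h : IsIntCoord X Y) : IsIntCoord X (-Y) where
  fst := h.fst
  snd := h.snd.neg
  surj m n := by
    obtain ⟨z, hz, hXz, hYz⟩ := h.surj m (-n)
    exact ⟨z, hz, hXz, by simp [hYz]⟩
  inj z w hX hY := h.inj z w hX (by simpa using hY)

lemma one_sub_fst (h : IsIntCoord X Y) : IsIntCoord (AffineMap.const ℝ Pt 1 - X) Y where
  fst := h.fst.one_sub
  snd := h.snd
  surj m n := by
    obtain ⟨z, hz, hXz, hYz⟩ := h.surj (1 - m) n
    exact ⟨z, hz, by simp [hXz], hYz⟩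
  inj z w hX hY := h.inj z w (by simpa using hX) hY

lemma shear (h : IsIntCoord X Y) (k : ℤ) : IsIntCoord (X - (k : ℝ) • Y) Y where
  fst := h.fst.sub_smul h.snd k
  snd := h.snd
  surj m n := by
    obtain ⟨z, hz, hXz, hYz⟩ := h.surj (m + k * n) n
    exact ⟨z, hz, by simp [hXz, hYz], hYz⟩
  inj z w hX hY := h.inj z w (by simpa [hY] using hX) hY

lemma closedUnderSplits (h : IsIntCoord X Y) {k : ℕ} (r : Fin k → Pt) (f : Pt)
    (U : Pt × (Fin k → ℝ) →ᵃ[ℝ] ℝ) :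
    ClosedUnderSplits (splitFilter k r f) (fun p => X p.1) (fun p => Y p.1) U := by
  intro m n N w a b c hs
  obtain ⟨μ, d, hX⟩ := h.fst
  obtain ⟨ν, e, hY⟩ := h.snd
  have hconv : Convex ℝ {p : Pt × (Fin k → ℝ) | w * U p ≤ a * X p.1 + b * Y p.1 + c} := by
    let Φ : Pt × (Fin k → ℝ) →ᵃ[ℝ] ℝ :=
      (a • X + b • Y).comp AffineMap.fst + AffineMap.const ℝ _ c - w • U
    have hΦ : {p : Pt × (Fin k → ℝ) | w * U p ≤ a * X p.1 + b * Y p.1 + c} = Φ ⁻¹' Ici 0 := by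
      ext p
      simp [Φ]
    rw [hΦ]
    exact (convex_Ici (0 : ℝ)).affine_preimage Φ
  refine eventually_mem_of_split hconv (fun j => m * μ j + n * ν j) (N - m * d - n * e) ?_
  filter_upwards [hs] with p hp hd
  have hsum : ∑ j, ((m * μ j + n * ν j : ℤ) : ℝ) * p.1 j =
      m * X p.1 + n * Y p.1 - m * d - n * e := by
    simp only [hX, hY, Fin.sum_univ_two]
    push_cast
    ring
  rw [hsum] at hd
  push_cast at hd
  exact hp (hd.imp (fun h => by linarith) (fun h => by linarith))

end IsIntCoord

lemma exists_isIntCoord_of_isCoprime {z : Pt} (hz : IsIntPt z) {p q : ℤ} (hpq : IsCoprime p q) :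
    ∃ X Y, IsIntCoord X Y ∧ ∀ t : ℝ, X (z + t • ![(p : ℝ), q]) = t ∧
      Y (z + t • ![(p : ℝ), q]) = 0 := by
  obtain ⟨s, t, hst⟩ := hpq
  have hst : (s : ℝ) * p + t * q = 1 := by exact_mod_cast hst
  choose a ha using hz
  let P (j : Fin 2) : Pt →ᵃ[ℝ] ℝ := (LinearMap.proj j).toAffineMap - AffineMap.const ℝ Pt (a j : ℝ)
  have hP (j : Fin 2) (x : Pt) : P j x = x j - a j := by simp [P]
  refine ⟨(s : ℝ) • P 0 + (t : ℝ) • P 1, (p : ℝ) • P 1 - (q : ℝ) • P 0, ⟨?_, ?_, ?_, ?_⟩, ?_⟩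
  · exact ⟨![s, t], -(s * a 0 + t * a 1), fun x => by simp [hP]; ring⟩
  · exact ⟨![-q, p], q * a 0 - p * a 1, fun x => by simp [hP]; ring⟩
  · intro m n
    refine ⟨![(a 0 + m * p - n * t : ℤ), (a 1 + m * q + n * s : ℤ)],
      Fin.forall_fin_two.2 ⟨⟨_, rfl⟩, ⟨_, rfl⟩⟩, ?_, ?_⟩
    · simp [hP]
      linear_combination (m : ℝ) * hst
    · simp [hP]
      linear_combination (n : ℝ) * hst
  · intro x y hX hY
    simp [hP] at hX hY
    funext j
    fin_cases j
    · simp only [Fin.zero_eta]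
      linear_combination (p : ℝ) * hX - t * hY - (x 0 - y 0) * hst
    · simp only [Fin.mk_one]
      linear_combination (q : ℝ) * hX + s * hY - (x 1 - y 1) * hst
  · intro c
    have hP₀ : P 0 (z + c • ![(p : ℝ), q]) = c * p := by rw [hP, Pi.add_apply, ha]; simp
    have hP₁ : P 1 (z + c • ![(p : ℝ), q]) = c * q := by rw [hP, Pi.add_apply, ha]; simp
    simp only [AffineMap.coe_add, AffineMap.coe_sub, AffineMap.coe_smul, Pi.add_apply, Pi.sub_apply,
      Pi.smul_apply, smul_eq_mul, hP₀, hP₁]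
    exact ⟨by linear_combination c * hst, by ring⟩

lemma exists_isIntCoord {z w : Pt} (hz : IsIntPt z) (hw : IsIntPt w) (hne : z ≠ w) :
    ∃ X Y, IsIntCoord X Y ∧ X z = 0 ∧ Y z = 0 ∧ 1 ≤ X w ∧ Y w = 0 := by
  choose a ha using id hz
  choose b hb using hw
  have hgcd : 0 < Int.gcd (b 0 - a 0) (b 1 - a 1) := by
    rw [Int.gcd_pos_iff]
    by_contra! hab
    refine hne (funext (Fin.forall_fin_two.2 ⟨?_, ?_⟩)) <;> rw [ha, hb, Int.cast_inj] <;> omega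
  obtain ⟨g, p, q, hg, hpq, hp, hq⟩ := Int.exists_gcd_one' hgcd
  have hwz : w = z + (g : ℝ) • ![(p : ℝ), q] := by
    have hp : (b 0 : ℝ) - a 0 = p * g := by exact_mod_cast hp
    have hq : (b 1 : ℝ) - a 1 = q * g := by exact_mod_cast hq
    refine funext (Fin.forall_fin_two.2 ⟨?_, ?_⟩) <;> simp [ha, hb] <;> linarith
  obtain ⟨X, Y, h, hline⟩ := exists_isIntCoord_of_isCoprime hz (Int.isCoprime_iff_gcd_eq_one.2 hpq)
  have hz0 := hline 0
  rw [zero_smul, add_zero] at hz0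
  have hwg := hline g
  rw [← hwz] at hwg
  exact ⟨X, Y, h, hz0.1, hz0.2, by rw [hwg.1]; exact_mod_cast hg, hwg.2⟩

end IntegralCoordinates

section InducedSet

open scoped Matrix

variable {k : ℕ} {r : Fin k → Pt} {f : Pt} {α : Fin k → ℝ}

lemma zero_mem_coneGen (S : Set Pt) : 0 ∈ coneGen S :=
  ⟨0, ![], ![], fun j => j.elim0, fun j => j.elim0, by simp⟩

lemma smul_mem_coneGen {S : Set Pt} {x : Pt} (hx : x ∈ coneGen S) {c : ℝ} (hc : 0 ≤ c) :
    c • x ∈ coneGen S := by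
  obtain ⟨n, d, v, hd, hv, rfl⟩ := hx
  exact ⟨n, c • d, v, fun j => mul_nonneg hc (hd j), hv, by simp [Finset.smul_sum, mul_smul]⟩

lemma subset_coneGen (S : Set Pt) : S ⊆ coneGen S := fun v hv =>
  ⟨1, 1, fun _ => v, fun _ => zero_le_one, fun _ => hv, by simp⟩

lemma convexHull_subset_inducedSet :
    convexHull ℝ ({f} ∪ {x | ∃ i, 0 < α i ∧ x = f + (α i)⁻¹ • r i}) ⊆ inducedSet k r f α :=
  fun x hx => ⟨x, hx, 0, zero_mem_coneGen _, add_zero x⟩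

lemma self_mem_inducedSet : f ∈ inducedSet k r f α :=
  convexHull_subset_inducedSet (subset_convexHull ℝ _ (Or.inl rfl))

lemma add_inv_smul_mem_inducedSet {i : Fin k} (hi : 0 < α i) :
    f + (α i)⁻¹ • r i ∈ inducedSet k r f α :=
  convexHull_subset_inducedSet (subset_convexHull ℝ _ (Or.inr ⟨i, hi, rfl⟩))

lemma add_smul_mem_inducedSet {i : Fin k} (hi : α i = 0) {c : ℝ} (hc : 0 ≤ c) :
    f + c • r i ∈ inducedSet k r f α :=
  add_mem_add (subset_convexHull ℝ _ (Or.inl rfl))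
    (smul_mem_coneGen (subset_coneGen {x | ∃ i, α i = 0 ∧ x = r i} ⟨i, hi, rfl⟩) hc)

lemma add_single_mem_relaxP {p : Pt × (Fin k → ℝ)} (hp : p ∈ relaxP k r f) (i : Fin k) {c : ℝ}
    (hc : 0 ≤ c) : (p.1 + c • r i, p.2 + Pi.single i c) ∈ relaxP k r f := by
  refine ⟨add_nonneg (show 0 ≤ p.2 from hp.1) (Pi.single_nonneg.2 hc), ?_⟩
  simp [hp.2, add_smul, Finset.sum_add_distrib, Pi.single_apply, add_assoc]

lemma convex_relaxP_inter_dotProduct_le (γ : ℝ) :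
    Convex ℝ {p | p ∈ relaxP k r f ∧ α ⬝ᵥ p.2 ≤ γ} :=
  convex_relaxP.inter <| convex_halfSpace_le
    (f := fun p : Pt × (Fin k → ℝ) => α ⬝ᵥ p.2)
    ⟨fun _ _ => dotProduct_add _ _ _, fun _ _ => dotProduct_smul _ _ _⟩ γ

lemma inducedSet_subset_image_fst :
    inducedSet k r f α ⊆ Prod.fst '' {p ∈ relaxP k r f | α ⬝ᵥ p.2 ≤ 1} := by
  have hhull : convexHull ℝ ({f} ∪ {x | ∃ i, 0 < α i ∧ x = f + (α i)⁻¹ • r i}) ⊆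
      Prod.fst '' {p ∈ relaxP k r f | α ⬝ᵥ p.2 ≤ 1} := by
    have hf : (f, 0) ∈ relaxP k r f := ⟨fun _ => le_rfl, by simp⟩
    refine convexHull_min ?_
      ((convex_relaxP_inter_dotProduct_le 1).linear_image (LinearMap.fst ℝ Pt _))
    rintro _ (rfl | ⟨i, hi, rfl⟩)
    · exact ⟨_, ⟨hf, by simp⟩, rfl⟩
    · refine ⟨_, ⟨add_single_mem_relaxP hf i (inv_pos.2 hi).le, ?_⟩, rfl⟩
      simp [hi.ne']
  rintro _ ⟨x, hx, _, ⟨n, c, v, hc, hv, rfl⟩, rfl⟩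
  induction n with
  | zero => simpa using hhull hx
  | succ n ih =>
    obtain ⟨p, ⟨hp, hα⟩, hpx⟩ := ih (Fin.init c) (Fin.init v) (fun j => hc _) (fun j => hv _)
    obtain ⟨i, hi, hvi⟩ := hv (Fin.last n)
    refine ⟨_, ⟨add_single_mem_relaxP hp i (hc (Fin.last n)), ?_⟩, ?_⟩
    · simpa [dotProduct_add, hi] using hα
    · simp [hpx, Fin.sum_univ_castSucc, hvi, Fin.init, add_assoc]

lemma latticeFree_inducedSet_of_valid (hvalid : ValidIneq k r f α 1) :
    LatticeFree (inducedSet k r f α) := by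
  intro z hz hzint
  have hcont : Filter.Tendsto (fun ε : ℝ => z + ε • (z - f)) (nhds 0) (nhds z) := by
    have : Continuous fun ε : ℝ => z + ε • (z - f) := by fun_prop
    simpa using this.tendsto 0
  obtain ⟨ε, hε, hmem⟩ := (hcont.eventually (mem_interior_iff_mem_nhds.1 hz)).exists_gt
  obtain ⟨⟨w, s⟩, ⟨⟨hs0, hs⟩, hs1⟩, rfl : w = _⟩ := inducedSet_subset_image_fst hmem
  have hpos : 0 < 1 + ε := by linarith
  have hz' : z = f + ∑ i, ((1 + ε)⁻¹ • s) i • r i := by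
    simp only [Pi.smul_apply, smul_assoc, ← Finset.smul_sum]
    rw [← sub_eq_iff_eq_add', eq_inv_smul_iff₀ hpos.ne', ← sub_eq_iff_eq_add'.2 hs]
    module
  have hle : 1 ≤ α ⬝ᵥ ((1 + ε)⁻¹ • s) :=
    hvalid (z, _) ⟨hzint, fun i => mul_nonneg (inv_pos.2 hpos).le (hs0 i), hz'⟩
  rw [dotProduct_smul, smul_eq_mul, ← div_eq_inv_mul, le_div_iff₀ hpos] at hle
  linarith

lemma exists_eq_add_inv_smul_of_mem_extremePoints {v : Pt}
    (hv : v ∈ (inducedSet k r f α).extremePoints ℝ) (hne : v ≠ f) :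
    ∃ i, v = f + (α i)⁻¹ • r i := by
  obtain ⟨a, ha, c, hc, hac⟩ := hv.1
  have hva : a = v := by
    have h2c := add_mem_add ha (smul_mem_coneGen hc zero_le_two)
    refine ((mem_extremePoints.1 hv).2 a (convexHull_subset_inducedSet ha) _ h2c ?_).1
    refine ⟨1 / 2, 1 / 2, by norm_num, by norm_num, by norm_num, ?_⟩
    rw [← hac]
    module
  have hext := inter_extremePoints_subset_extremePoints_of_subset convexHull_subset_inducedSet
    ⟨hva ▸ ha, hv⟩
  rcases extremePoints_convexHull_subset hext with h | ⟨i, -, hi⟩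
  · exact absurd h hne
  · exact ⟨i, hi⟩

lemma neg_mul_le_linear_of_nonneg (hα : ∀ i, 0 ≤ α i) {φ : Pt →ᵃ[ℝ] ℝ}
    (hφ : ∀ x ∈ inducedSet k r f α, 0 ≤ φ x) (i : Fin k) : -(α i * φ f) ≤ φ.linear (r i) := by
  have hline (c : ℝ) : φ (f + c • r i) = φ f + c * φ.linear (r i) := by
    simpa [add_comm] using φ.map_vadd f (c • r i)
  rcases (hα i).eq_or_lt with hi | hi
  · by_contra! hlt
    rw [← hi, zero_mul, neg_zero] at hlt
    have hf := hφ f self_mem_inducedSet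
    have := hφ _ (add_smul_mem_inducedSet (r := r) (f := f) hi.symm
      (c := (φ f + 1) / -φ.linear (r i)) (div_nonneg (by linarith) (by linarith)))
    rw [hline, div_neg, neg_mul, div_mul_cancel₀ _ hlt.ne] at this
    linarith
  · have := hφ _ (add_inv_smul_mem_inducedSet hi)
    rw [hline, inv_mul_eq_div, ← neg_le_iff_add_nonneg', le_div_iff₀ hi] at this
    linarith

lemma mul_slack_le_of_nonneg (hα : ∀ i, 0 ≤ α i) {φ : Pt →ᵃ[ℝ] ℝ}
    (hφ : ∀ x ∈ inducedSet k r f α, 0 ≤ φ x) {p : Pt × (Fin k → ℝ)} (hp : p ∈ relaxP k r f) :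
    φ f * (1 - α ⬝ᵥ p.2) ≤ φ p.1 := by
  obtain ⟨hp0, hp⟩ := hp
  calc φ f * (1 - α ⬝ᵥ p.2) = φ f + ∑ i, p.2 i * -(α i * φ f) := by
        rw [mul_sub, mul_one, sub_eq_add_neg, dotProduct, Finset.mul_sum, ← Finset.sum_neg_distrib]
        exact congrArg _ (Finset.sum_congr rfl fun i _ => by ring)
    _ ≤ φ f + ∑ i, p.2 i * φ.linear (r i) := by
        gcongr with i
        · exact hp0 i
        · exact neg_mul_le_linear_of_nonneg hα hφ i
    _ = φ p.1 := by
        have := φ.map_vadd f (∑ i, p.2 i • r i)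
        simp only [map_sum, map_smul, vadd_eq_add, smul_eq_mul] at this
        rw [hp, add_comm f, this, add_comm]

end InducedSet

section AffineBasis

variable {ι E : Type*} [AddCommGroup E] [Module ℝ E] (T : AffineBasis ι ℝ E)

lemma apply_eq_mul_coord {φ : E →ᵃ[ℝ] ℝ} {i : ι} (h : ∀ j, j ≠ i → φ (T j) = 0) (x : E) :
    φ x = φ (T i) * T.coord i x := by
  have : φ = φ (T i) • T.coord i := by
    refine AffineMap.ext_on T.tot ?_
    rintro _ ⟨j, rfl⟩
    rcases eq_or_ne j i with rfl | hj
    · simp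
    · simp [h j hj, T.coord_apply_ne hj.symm]
  exact congrArg (· x) this

lemma mem_convexHull_iff_of_facets {T : AffineBasis ι ℝ E} {φ : ι → E →ᵃ[ℝ] ℝ}
    (hpos : ∀ i, 0 < φ i (T i)) (hzero : ∀ i j, j ≠ i → φ i (T j) = 0) {x : E} :
    x ∈ convexHull ℝ (range T) ↔ ∀ i, 0 ≤ φ i x := by
  rw [T.convexHull_eq_nonneg_coord, mem_ofPred_eq]
  refine forall_congr' fun i => ?_
  rw [apply_eq_mul_coord T (hzero i), mul_nonneg_iff_of_pos_left (hpos i)]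

lemma mem_interior_convexHull_iff_of_facets [Finite ι] {V : Type*} [NormedAddCommGroup V]
    [NormedSpace ℝ V] {T : AffineBasis ι ℝ V} {φ : ι → V →ᵃ[ℝ] ℝ}
    (hpos : ∀ i, 0 < φ i (T i)) (hzero : ∀ i j, j ≠ i → φ i (T j) = 0) {x : V} :
    x ∈ interior (convexHull ℝ (range T)) ↔ ∀ i, 0 < φ i x := by
  rw [T.interior_convexHull, mem_ofPred_eq]
  refine forall_congr' fun i => ?_
  rw [apply_eq_mul_coord T (hzero i), mul_pos_iff_of_pos_left (hpos i)]

lemma affineBasis_mem_extremePoints_convexHull [Finite ι] (i : ι) :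
    T i ∈ (convexHull ℝ (range T)).extremePoints ℝ := by
  have := Fintype.ofFinite ι
  refine mem_extremePoints_iff_left.2 ⟨subset_convexHull ℝ _ (mem_range_self i), ?_⟩
  rw [T.convexHull_eq_nonneg_coord]
  rintro x hx y hy ⟨c, d, hc, hd, hcd, hxy⟩
  have hzero (j : ι) (hj : j ≠ i) : T.coord j x = 0 := by
    have hcomb : c * T.coord j x + d * T.coord j y = 0 := by
      rw [← T.coord_apply_ne hj, ← hxy, Convex.combo_affine_apply hcd, smul_eq_mul, smul_eq_mul]
    have := (add_eq_zero_iff_of_nonneg (mul_nonneg hc.le (hx j)) (mul_nonneg hd.le (hy j))).1 hcomb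
    exact (mul_eq_zero.1 this.1).resolve_left hc.ne'
  refine T.ext_elem fun j => ?_
  rcases eq_or_ne j i with rfl | hj
  · rw [T.coord_apply_eq, ← T.sum_coord_apply_eq_one x,
      Finset.sum_eq_single j (fun l _ => hzero l) (by simp)]
  · rw [hzero j hj, T.coord_apply_ne hj]

end AffineBasis

section Triangle

variable {E : Type*} [AddCommGroup E] [Module ℝ E]

lemma eq_zero_of_mem_segment {φ : E →ᵃ[ℝ] ℝ} {v w y z : E} (hy : y ∈ segment ℝ v w)
    (hz : z ∈ segment ℝ v w) (hne : y ≠ z) (hφy : φ y = 0) (hφz : φ z = 0) :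
    φ v = 0 ∧ φ w = 0 := by
  rw [segment_eq_image_lineMap] at hy hz
  obtain ⟨s, -, rfl⟩ := hy
  obtain ⟨t, -, rfl⟩ := hz
  have hst : s - t ≠ 0 := sub_ne_zero.2 fun h => hne (h ▸ rfl)
  simp only [AffineMap.apply_lineMap, AffineMap.lineMap_apply_ring'] at hφy hφz
  have hvw : φ w - φ v = 0 :=
    (mul_eq_zero.1 (by linear_combination hφy - hφz)).resolve_left hst
  have hv : φ v = 0 := by simpa [hvw] using hφy
  exact ⟨hv, by linarith⟩

/-- In the coordinates `X`, `Y` the triangle with vertices `T 0`, `T 1`, `T 2` has apex `T 0` above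
the base from `T 1` to `T 2` on the line `Y = 0`, and `σ₁`, `σ₂` are the inverse slopes of its left
and right sides. -/
structure IsBasedTriangle (T : Fin 3 → E) (X Y : E →ᵃ[ℝ] ℝ) (σ₁ σ₂ : ℝ) : Prop where
  snd_left : Y (T 1) = 0
  snd_right : Y (T 2) = 0
  snd_apex_pos : 0 < Y (T 0)
  left_lt_right : X (T 1) < X (T 2)
  left_apex : X (T 0) = X (T 1) + Y (T 0) * σ₁
  right_apex : X (T 0) = X (T 2) + Y (T 0) * σ₂

namespace IsBasedTriangle

/-- The affine functions whose positivity cuts out the interior of a based triangle; the `i`-th one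
vanishes on the side opposite to the vertex `T i`. -/
noncomputable def facets (T : Fin 3 → E) (X Y : E →ᵃ[ℝ] ℝ) (σ₁ σ₂ : ℝ) : Fin 3 → E →ᵃ[ℝ] ℝ :=
  ![Y, AffineMap.const ℝ E (X (T 2)) + σ₂ • Y - X, X - AffineMap.const ℝ E (X (T 1)) - σ₁ • Y]

variable {X Y : E →ᵃ[ℝ] ℝ} {σ₁ σ₂ : ℝ} {T : AffineBasis (Fin 3) ℝ E} {x : E}

lemma sub_smul {T : Fin 3 → E} (B : IsBasedTriangle T X Y σ₁ σ₂) (c : ℝ) :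
    IsBasedTriangle T (X - c • Y) Y (σ₁ - c) (σ₂ - c) where
  snd_left := B.snd_left
  snd_right := B.snd_right
  snd_apex_pos := B.snd_apex_pos
  left_lt_right := by simpa [B.snd_left, B.snd_right] using B.left_lt_right
  left_apex := by
    simp [B.snd_left]
    linear_combination B.left_apex
  right_apex := by
    simp [B.snd_right]
    linear_combination B.right_apex

lemma facets_pos {T : Fin 3 → E} (B : IsBasedTriangle T X Y σ₁ σ₂) (i : Fin 3) :
    0 < facets T X Y σ₁ σ₂ i (T i) := by
  fin_cases i <;> simp [facets, B.snd_left, B.snd_right, B.snd_apex_pos, B.left_lt_right]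

lemma facets_eq_zero {T : Fin 3 → E} (B : IsBasedTriangle T X Y σ₁ σ₂) (i j : Fin 3) (h : j ≠ i) :
    facets T X Y σ₁ σ₂ i (T j) = 0 := by
  have hl := B.left_apex
  have hr := B.right_apex
  fin_cases i <;> fin_cases j <;>
    simp [facets, B.snd_left, B.snd_right] at h ⊢ <;> linarith

lemma mem_convexHull_iff (B : IsBasedTriangle T X Y σ₁ σ₂) :
    x ∈ convexHull ℝ (range T) ↔ ∀ i, 0 ≤ facets T X Y σ₁ σ₂ i x :=
  mem_convexHull_iff_of_facets B.facets_pos B.facets_eq_zero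

lemma mem_interior_convexHull_iff {V : Type*} [NormedAddCommGroup V] [NormedSpace ℝ V]
    {T : AffineBasis (Fin 3) ℝ V} {X Y : V →ᵃ[ℝ] ℝ} {x : V} (B : IsBasedTriangle T X Y σ₁ σ₂) :
    x ∈ interior (convexHull ℝ (range T)) ↔ ∀ i, 0 < facets T X Y σ₁ σ₂ i x :=
  mem_interior_convexHull_iff_of_facets B.facets_pos B.facets_eq_zero

end IsBasedTriangle

end Triangle

section TypeT2A

variable {X Y : Pt →ᵃ[ℝ] ℝ}

lemma IsIntCoord.mem_openSegment_iff (h : IsIntCoord X Y) {v₀ v z : Pt} {σ : ℝ} (hv : Y v = 0)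
    (hv₀ : 0 < Y v₀) (hσ : X v₀ = X v + Y v₀ * σ) :
    z ∈ openSegment ℝ v₀ v ↔ 0 < Y z ∧ Y z < Y v₀ ∧ X z = X v + Y z * σ := by
  constructor
  · rintro ⟨a, b, ha, hb, hab, rfl⟩
    simp only [Convex.combo_affine_apply hab, smul_eq_mul, hv, hσ]
    obtain rfl : b = 1 - a := by linarith
    exact ⟨by nlinarith, by nlinarith, by ring⟩
  · rintro ⟨hpos, hlt, hX⟩
    have hab : Y z / Y v₀ + (1 - Y z / Y v₀) = 1 := by ring
    refine ⟨Y z / Y v₀, 1 - Y z / Y v₀, by positivity, ?_, hab, h.inj _ _ ?_ ?_⟩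
    · rwa [sub_pos, div_lt_one hv₀]
    · simp only [Convex.combo_affine_apply hab, smul_eq_mul, hX, hσ]
      field_simp
      ring
    · simp only [Convex.combo_affine_apply hab, smul_eq_mul, hv]
      field_simp
      ring

lemma IsIntCoord.existsUnique_isLatticeHeight (h : IsIntCoord X Y) {v₀ v : Pt} {σ : ℝ}
    (hv : Y v = 0) (hv₀ : 0 < Y v₀) (hσ : X v₀ = X v + Y v₀ * σ)
    (hu : ∃! z, z ∈ openSegment ℝ v₀ v ∧ IsIntPt z) : ∃! n, IsLatticeHeight (X v) σ (Y v₀) n := by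
  obtain ⟨z, ⟨hz, hzint⟩, huniq⟩ := hu
  obtain ⟨m, hm⟩ := h.fst.exists_int hzint
  obtain ⟨n, hn⟩ := h.snd.exists_int hzint
  rw [h.mem_openSegment_iff hv hv₀ hσ, hm, hn] at hz
  refine ⟨n, ⟨by exact_mod_cast hz.1, hz.2.1, m, hz.2.2⟩, ?_⟩
  rintro n' ⟨hpos, hlt, m', hm'⟩
  obtain ⟨w, hw, hXw, hYw⟩ := h.surj m' n'
  have hwz : w = z := by
    refine huniq w ⟨(h.mem_openSegment_iff hv hv₀ hσ).2 ?_, hw⟩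
    rw [hXw, hYw]
    exact ⟨by exact_mod_cast hpos, hlt, hm'⟩
  exact_mod_cast hYw.symm.trans (hwz ▸ hn)

variable {T : AffineBasis (Fin 3) ℝ Pt}

lemma IsBasedTriangle.isT2AProfile {σ₁ σ₂ : ℝ} (B : IsBasedTriangle T X Y σ₁ σ₂)
    (h : IsIntCoord X Y) (hleft : X (T 1) ≤ 0) (hright : 1 ≤ X (T 2)) (hint : ¬ IsIntPt (T 0))
    (hfree : LatticeFree (convexHull ℝ (range T)))
    (hu₁ : ∃! z, z ∈ openSegment ℝ (T 0) (T 1) ∧ IsIntPt z)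
    (hu₂ : ∃! z, z ∈ openSegment ℝ (T 0) (T 2) ∧ IsIntPt z) :
    IsT2AProfile (X (T 1)) (X (T 2)) σ₁ σ₂ (Y (T 0)) where
  left_nonpos := hleft
  one_le_right := hright
  height_pos := B.snd_apex_pos
  apex_eq := B.left_apex.symm.trans B.right_apex
  apex_not_int m n hn hm := hint (h.isIntPt (B.left_apex.trans hm) hn)
  latticeFree m n hn hm := by
    by_contra! hlt
    obtain ⟨z, hz, hXz, hYz⟩ := h.surj m n
    refine hfree z (B.mem_interior_convexHull_iff.2 ?_) hz
    have hpos : 0 < Y z := by rw [hYz]; exact_mod_cast hn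
    intro i
    fin_cases i <;> simp [facets, hXz, hYz] at hpos ⊢ <;> linarith
  existsUnique_left := h.existsUnique_isLatticeHeight B.snd_left B.snd_apex_pos B.left_apex hu₁
  existsUnique_right := h.existsUnique_isLatticeHeight B.snd_right B.snd_apex_pos B.right_apex hu₂

lemma exists_isIntCoord_of_mem_segment {v w y z : Pt} (hy : IsIntPt y) (hz : IsIntPt z)
    (hne : y ≠ z) (hys : y ∈ segment ℝ v w) (hzs : z ∈ segment ℝ v w) :
    ∃ X Y, IsIntCoord X Y ∧ Y v = 0 ∧ Y w = 0 ∧ X v ≤ 0 ∧ 1 ≤ X w := by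
  obtain ⟨X, Y, h, hXy, hYy, hXz, hYz⟩ := exists_isIntCoord hy hz hne
  obtain ⟨hYv, hYw⟩ := eq_zero_of_mem_segment hys hzs hne hYy hYz
  have hmem {x : Pt} (hx : x ∈ segment ℝ v w) : X x ∈ uIcc (X v) (X w) := by
    rw [← segment_eq_uIcc, ← image_segment]
    exact mem_image_of_mem X hx
  have hmin : min (X v) (X w) ≤ 0 := hXy ▸ (hmem hys).1
  have hmax : 1 ≤ max (X v) (X w) := hXz.trans (hmem hzs).2
  rcases le_total (X v) (X w) with hvw | hvw
  · exact ⟨X, Y, h, hYv, hYw, by rwa [min_eq_left hvw] at hmin, by rwa [max_eq_right hvw] at hmax⟩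
  · rw [min_eq_right hvw] at hmin
    rw [max_eq_left hvw] at hmax
    exact ⟨_, Y, h.one_sub_fst, hYv, hYw, by simpa using hmax, by simpa using hmin⟩

lemma IsIntCoord.snd_apex_ne_zero (h : IsIntCoord X Y) (hY₁ : Y (T 1) = 0) (hY₂ : Y (T 2) = 0) :
    Y (T 0) ≠ 0 := by
  intro hY₀
  have hY : Y = 0 := by
    refine AffineMap.ext_on T.tot ?_
    rintro _ ⟨i, rfl⟩
    fin_cases i <;> assumption
  obtain ⟨z, -, -, hYz⟩ := h.surj 0 1
  simp [hY] at hYz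

lemma exists_isBasedTriangle {y z : Pt} (hy : IsIntPt y) (hz : IsIntPt z) (hne : y ≠ z)
    (hys : y ∈ segment ℝ (T 1) (T 2)) (hzs : z ∈ segment ℝ (T 1) (T 2)) :
    ∃ X Y σ₁ σ₂, IsIntCoord X Y ∧ IsBasedTriangle T X Y σ₁ σ₂ ∧ X (T 1) ≤ 0 ∧ 1 ≤ X (T 2) := by
  obtain ⟨X, Y, h, hY₁, hY₂, hX₁, hX₂⟩ := exists_isIntCoord_of_mem_segment hy hz hne hys hzs
  obtain ⟨Y, h, hY₁, hY₂, hY₀⟩ :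
      ∃ Y', IsIntCoord X Y' ∧ Y' (T 1) = 0 ∧ Y' (T 2) = 0 ∧ 0 < Y' (T 0) := by
    rcases (h.snd_apex_ne_zero hY₁ hY₂).lt_or_gt with hneg | hpos
    · exact ⟨-Y, h.neg_snd, by simpa using hY₁, by simpa using hY₂, by simpa using hneg⟩
    · exact ⟨Y, h, hY₁, hY₂, hpos⟩
  refine ⟨X, Y, (X (T 0) - X (T 1)) / Y (T 0), (X (T 0) - X (T 2)) / Y (T 0), h,
    ⟨hY₁, hY₂, hY₀, by linarith, ?_, ?_⟩, hX₁, hX₂⟩ <;>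
  · rw [mul_div_cancel₀ _ hY₀.ne', add_sub_cancel]

lemma exists_affineBasis_of_affineIndependent {v₀ v₁ v₂ : Pt}
    (hv : AffineIndependent ℝ ![v₀, v₁, v₂]) :
    ∃ T : AffineBasis (Fin 3) ℝ Pt, T 0 = v₀ ∧ T 1 = v₁ ∧ T 2 = v₂ :=
  ⟨⟨_, hv, hv.affineSpan_eq_top_iff_card_eq_finrank_add_one.2 (by simp)⟩, rfl, rfl, rfl⟩

/-- A lattice-free `T^{2A}` triangle in normal form: its sides pass through the lattice points
`(0, 1)` and `(1, 1)`, and its base is `[-a, 1 + b] × {0}`. -/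
structure IsNormalT2A (T : Fin 3 → Pt) (X Y : Pt →ᵃ[ℝ] ℝ) (a b : ℝ) : Prop where
  isIntCoord : IsIntCoord X Y
  isBasedTriangle : IsBasedTriangle T X Y a (-b)
  fst_left : X (T 1) = -a
  fst_right : X (T 2) = 1 + b
  left_nonneg : 0 ≤ a
  right_nonneg : 0 ≤ b
  one_lt_right : a = 0 → 1 < b
  one_lt_left : b = 0 → 1 < a

lemma IsT2AProfile.exists_isNormalT2A {T : Fin 3 → Pt} {σ₁ σ₂ : ℝ}
    (H : IsT2AProfile (X (T 1)) (X (T 2)) σ₁ σ₂ (Y (T 0))) (h : IsIntCoord X Y)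
    (B : IsBasedTriangle T X Y σ₁ σ₂) : ∃ X' a b, IsNormalT2A T X' Y a b := by
  obtain ⟨m, hm₁, hm₂⟩ := H.exists_section_one
  have hσ₁ : σ₁ - m = -X (T 1) := by linarith
  have hσ₂ : σ₂ - m = -(X (T 2) - 1) := by linarith
  have hB := B.sub_smul m
  rw [hσ₁, hσ₂] at hB
  refine ⟨X - (m : ℝ) • Y, -X (T 1), X (T 2) - 1, h.shear m, hB, ?_, ?_, ?_, ?_, ?_, ?_⟩
  · simp [B.snd_left]
  · simp [B.snd_right]
  · linarith [H.left_nonpos]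
  · linarith [H.one_le_right]
  · intro h₁
    linarith [H.two_lt_of_left_eq_zero (by linarith)]
  · intro h₂
    linarith [H.reflect.two_lt_of_left_eq_zero (by linarith)]

lemma IsT2A.exists_isNormalT2A {S : Set Pt} (hS : IsT2A S) (hfree : LatticeFree S) :
    ∃ (T : AffineBasis (Fin 3) ℝ Pt) (X Y : Pt →ᵃ[ℝ] ℝ) (a b : ℝ),
      S = convexHull ℝ (range T) ∧ IsNormalT2A T X Y a b := by
  obtain ⟨v₀, v₁, v₂, hv, hint, rfl, ⟨y, z, hne, hy, hz, hys, hzs⟩, hu₁, hu₂⟩ := hS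
  obtain ⟨T, rfl, rfl, rfl⟩ := exists_affineBasis_of_affineIndependent hv
  have hrange : {T 0, T 1, T 2} = range T := by
    ext x
    simp [Fin.exists_fin_succ, eq_comm]
  obtain ⟨X, Y, σ₁, σ₂, h, B, hX₁, hX₂⟩ := exists_isBasedTriangle hy hz hne hys hzs
  have H := B.isT2AProfile h hX₁ hX₂ hint (hrange ▸ hfree) hu₁ hu₂
  obtain ⟨X', a, b, hN⟩ := H.exists_isNormalT2A h B
  exact ⟨T, X', Y, a, b, congrArg _ hrange, hN⟩

end TypeT2A

section SplitRank

open scoped Matrix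

variable {k : ℕ} {r : Fin k → Pt} {f : Pt} {α : Fin k → ℝ}

/-- The slack `1 - ∑ αᵢ sᵢ` of the inequality `∑ αᵢ sᵢ ≥ 1`, which holds exactly where the slack
is nonpositive. -/
noncomputable def slack (α : Fin k → ℝ) : Pt × (Fin k → ℝ) →ᵃ[ℝ] ℝ :=
  AffineMap.const ℝ _ 1 - (∑ i, α i • LinearMap.proj (R := ℝ) i).toAffineMap.comp AffineMap.snd

lemma slack_apply (p : Pt × (Fin k → ℝ)) : slack α p = 1 - α ⬝ᵥ p.2 := by
  simp [slack, dotProduct]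

lemma eventually_slack_le (hα : ∀ i, 0 ≤ α i) {φ : Pt →ᵃ[ℝ] ℝ}
    (hφ : ∀ x ∈ inducedSet k r f α, 0 ≤ φ x) (hf : 0 < φ f) :
    ∀ᶠ p in splitFilter k r f, slack α p ≤ (φ f)⁻¹ * φ p.1 := by
  refine eventually_splitFilter_of_mem_relaxP fun p hp => ?_
  rw [← div_eq_inv_mul, le_div_iff₀' hf, slack_apply]
  exact mul_slack_le_of_nonneg hα hφ hp

lemma exists_rat_of_mem_extremePoints (hr : ∀ i, IsRatPt (r i)) (hf : IsRatPt f)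
    {X Y : Pt →ᵃ[ℝ] ℝ} (hX : IsIntAff X) (hY : IsIntAff Y) (hYf : Y f ≠ 0) {v : Pt}
    (hv : v ∈ (inducedSet k r f α).extremePoints ℝ) (hYv : Y v = 0) : ∃ q : ℚ, X v = q := by
  obtain ⟨i, rfl⟩ := exists_eq_add_inv_smul_of_mem_extremePoints hv fun h => hYf (h ▸ hYv)
  exact exists_rat_of_isRatPt_of_eq_zero hX hY hf (hr i) hYf hYv

lemma IsNormalT2A.eventually_slack_nonpos {T : AffineBasis (Fin 3) ℝ Pt} {X Y : Pt →ᵃ[ℝ] ℝ}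
    {a b : ℚ} (hN : IsNormalT2A T X Y a b) (hα : ∀ i, 0 ≤ α i)
    (hT : inducedSet k r f α = convexHull ℝ (range T))
    (hf : f ∈ interior (inducedSet k r f α)) : ∀ᶠ p in splitFilter k r f, slack α p ≤ 0 := by
  have B := hN.isBasedTriangle
  rw [hT] at hf
  have hpos := B.mem_interior_convexHull_iff.1 hf
  have hbound (i : Fin 3) := eventually_slack_le hα
    (fun x hx => B.mem_convexHull_iff.1 (hT ▸ hx) i) (hpos i)
  have hleft (x : Pt) : IsBasedTriangle.facets T X Y a (-b) 2 x = X x - a * (Y x - 1) := by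
    simp [IsBasedTriangle.facets, hN.fst_left]
    ring
  have hright (x : Pt) : IsBasedTriangle.facets T X Y a (-b) 1 x = 1 - X x - b * (Y x - 1) := by
    simp [IsBasedTriangle.facets, hN.fst_right]
    ring
  refine (hN.isIntCoord.closedUnderSplits r f (slack α)).le_zero_of_triangle
    (a := a) (b := b) ?_ ?_ ?_ ?_ (hpos 0) (inv_pos.2 (hpos 2)) (inv_pos.2 (hpos 1)) ?_ ?_ ?_
  · exact_mod_cast hN.left_nonneg
  · exact_mod_cast hN.right_nonneg
  · exact_mod_cast hN.one_lt_right
  · exact_mod_cast hN.one_lt_left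
  · filter_upwards [hbound 0] with p hp
    rwa [← div_eq_inv_mul, le_div_iff₀' (hpos 0)] at hp
  · filter_upwards [hbound 2] with p hp
    rwa [hleft p.1] at hp
  · filter_upwards [hbound 1] with p hp
    rwa [hright p.1] at hp

end SplitRank

theorem t2A_finite_split_rank (k : ℕ)
    (hk : 1 ≤ k)
    (r : Fin k → Pt) (f : Pt)
    (hr_rat : ∀ i, IsRatPt (r i)) (hr_ne : ∀ i, r i ≠ 0)
    (hf_rat : IsRatPt f) (hf_int : ¬ IsIntPt f)
    (hne : (mixedP k r f).Nonempty)
    (α : Fin k → ℝ) (hα : ∀ i, 0 ≤ α i)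
    (hvalid : ValidIneq k r f α 1)
    (hshape : IsT2A (inducedSet k r f α))
    (hfint : f ∈ interior (inducedSet k r f α)) :
    splitRank k r f α 1 ≠ ⊤ := by
  obtain ⟨T, X, Y, a, b, hT, hN⟩ :=
    hshape.exists_isNormalT2A (latticeFree_inducedSet_of_valid hvalid)
  have hYf : 0 < Y f := hN.isBasedTriangle.mem_interior_convexHull_iff.1 (hT ▸ hfint) 0
  have hrat (i : Fin 3) : Y (T i) = 0 → ∃ q : ℚ, X (T i) = q :=
    exists_rat_of_mem_extremePoints hr_rat hf_rat hN.isIntCoord.fst hN.isIntCoord.snd hYf.ne'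
      (hT ▸ affineBasis_mem_extremePoints_convexHull T i)
  obtain ⟨q₁, hq₁⟩ := hrat 1 hN.isBasedTriangle.snd_left
  obtain ⟨q₂, hq₂⟩ := hrat 2 hN.isBasedTriangle.snd_right
  obtain rfl : a = (-q₁ : ℚ) := by push_cast; linarith [hN.fst_left]
  obtain rfl : b = (q₂ - 1 : ℚ) := by push_cast; linarith [hN.fst_right]
  refine splitRank_ne_top ?_
  filter_upwards [hN.eventually_slack_nonpos hα hT hfint] with p hp
  rw [slack_apply] at hp
  exact sub_nonpos.1 hp
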